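/- arXiv:2006.04936 — 5 statements merged into one kernel-verified Lean document; each statement's English description precedes it below -/
import Mathlib

section
/- Let p ≥ 3 be a prime, let a and s be positive integers, and set c = 1/(s(p−1)). Let e : ℤ → ℤ be an a-periodic function with 0 ≤ e_i ≤ p−1 for all i, set ω = e_0 + e_1 + ⋯ + e_{a−1}, and for each integer j set q(j) = −∑_{i=0}^{a−1} (i+1)·e_{i+j}. Let K be a field equipped with a valuation v : K → ℝ ∪ {∞} extending a nonarchimedean absolute value (v(x+y) ≥ min(v(x),v(y)), v(xy) = v(x)+v(y), v(0) = ∞), and let α = ∑_{k≥0} α_k u^k be a formal power series over K with v(α_k) ≥ k·c for all k ≥ 0 (we set α_k = 0 for k < 0). Then for every integer j, every integer n ≥ 1 and every integer m ≥ 1, one has v(α_{pm − n − e_j}) + (q(j)/a)·c + p·n·c ≥ (q(j+1)/a)·c + p·m·c + n·(p−1)·c − (ω/a)·c. -/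
open scoped BigOperators

/-- Coefficientwise form of the second estimate of Proposition 4.1 ("type 1" local
`U_p` estimate). -/
theorem stmt0
    (p a s : ℕ) (hp : p.Prime) (hp3 : 3 ≤ p) (ha : 0 < a) (hs : 0 < s)
    (c : ℝ) (hc : c = 1 / (s * (p - 1)))
    (e : ℤ → ℤ) (he : ∀ i : ℤ, e (i + a) = e i)
    (he0 : ∀ i : ℤ, 0 ≤ e i) (he1 : ∀ i : ℤ, e i ≤ (p : ℤ) - 1)
    (ω : ℤ) (hω : ω = ∑ i ∈ Finset.range a, e i)
    (q : ℤ → ℤ) (hq : ∀ j : ℤ, q j = -∑ i ∈ Finset.range a, ((i : ℤ) + 1) * e (i + j))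
    (K : Type*) [Field K]
    (v : K → WithTop ℝ)
    (hv_add : ∀ x y : K, min (v x) (v y) ≤ v (x + y))
    (hv_mul : ∀ x y : K, v (x * y) = v x + v y)
    (hv_zero : v 0 = ⊤)
    (α : ℤ → K) (hαneg : ∀ k : ℤ, k < 0 → α k = 0)
    (hα : ∀ k : ℤ, 0 ≤ k → (((k : ℝ) * c : ℝ) : WithTop ℝ) ≤ v (α k)) :
    ∀ j n m : ℤ, 1 ≤ n → 1 ≤ m →
      (((q (j + 1) : ℝ) / (a : ℝ) * c + (p : ℝ) * (m : ℝ) * c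
          + (n : ℝ) * ((p : ℝ) - 1) * c - (ω : ℝ) / (a : ℝ) * c : ℝ) : WithTop ℝ)
        ≤ v (α ((p : ℤ) * m - n - e j))
            + (((q j : ℝ) / (a : ℝ) * c + (p : ℝ) * (n : ℝ) * c : ℝ) : WithTop ℝ) := by
  intro j n m hn hm
  -- sums over a period do not depend on the starting point
  have hstep : ∀ j : ℤ, ∑ i ∈ Finset.range a, e (i + (j + 1)) = ∑ i ∈ Finset.range a, e (i + j) := by
    intro j
    have h1 := Finset.sum_range_succ (fun i : ℕ => e ((i : ℤ) + j)) a
    have h2 := Finset.sum_range_succ' (fun i : ℕ => e ((i : ℤ) + j)) a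
    have h3 : e ((a : ℤ) + j) = e j := by rw [add_comm]; exact he j
    have h4 : ∑ i ∈ Finset.range a, e (i + (j + 1))
        = ∑ i ∈ Finset.range a, e (((i + 1 : ℕ) : ℤ) + j) := by
      refine Finset.sum_congr rfl fun i _ => ?_
      congr 1; push_cast; ring
    simp only [h3, Nat.cast_zero, zero_add] at h1 h2
    rw [h4]; linarith
  have hper : ∀ j : ℤ, ∑ i ∈ Finset.range a, e (i + j) = ω := by
    intro j
    induction j using Int.induction_on with
    | zero => simp [hω]
    | succ k ih => rw [hstep, ih]
    | pred k ih =>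
      rw [← hstep, ← ih]
      simp
  have hqd : q j + ω = q (j + 1) + a * e j := by
    have h1 := Finset.sum_range_succ (fun i : ℕ => (i : ℤ) * e ((i : ℤ) + j)) a
    have h2 := Finset.sum_range_succ' (fun i : ℕ => (i : ℤ) * e ((i : ℤ) + j)) a
    have h3 : e ((a : ℤ) + j) = e j := by rw [add_comm]; exact he j
    have h4 : ∑ i ∈ Finset.range a, ((i : ℤ) + 1) * e (i + (j + 1))
        = ∑ i ∈ Finset.range a, ((i + 1 : ℕ) : ℤ) * e (((i + 1 : ℕ) : ℤ) + j) := by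
      refine Finset.sum_congr rfl fun i _ => ?_
      rw [show (i : ℤ) + (j + 1) = ((i + 1 : ℕ) : ℤ) + j by push_cast; ring]
      push_cast; ring
    have h5 : ∑ i ∈ Finset.range a, ((i : ℤ) + 1) * e (i + j)
        = ∑ i ∈ Finset.range a, (i : ℤ) * e (i + j) + ω := by
      rw [← hper j, ← Finset.sum_add_distrib]
      exact Finset.sum_congr rfl fun i _ => by ring
    simp only [h3, Nat.cast_zero, zero_mul, add_zero] at h1 h2
    rw [hq, hq, h4, h5]; linarith
  rcases lt_or_ge ((p : ℤ) * m - n - e j) 0 with hk | hk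
  · rw [hαneg _ hk, hv_zero]; simp
  · refine le_trans ?_ (add_le_add_left (hα _ hk) _)
    rw [← WithTop.coe_add, WithTop.coe_le_coe]
    have ha' : (a : ℝ) ≠ 0 := by positivity
    have hR : (q j : ℝ) + ω = q (j + 1) + a * e j := by exact_mod_cast hqd
    have hR2 : (q j : ℝ) = q (j + 1) + a * e j - ω := by linarith
    rw [hR2]
    apply le_of_eq
    push_cast
    field_simp
    ring
end

section
/- Let p ≥ 3 be a prime, let a and s be positive integers, and set c = 1/(s(p−1)). Let e : ℤ → ℤ be an a-periodic function with 0 ≤ e_i ≤ p−1 for all i, set ω = e_0 + e_1 + ⋯ + e_{a−1}, and for each integer j set q(j) = −∑_{i=0}^{a−1} (i+1)·e_{i+j}. Let K be a field equipped with a valuation v : K → ℝ ∪ {∞} (v(x+y) ≥ min(v(x),v(y)), v(xy) = v(x)+v(y), v(0) = ∞), and let α = ∑_{k≥0} α_k u^k be a formal power series over K with v(α_k) ≥ k·c for all k ≥ 0. Fix an integer j, and let f = ∑_{k≥1} f_k u^k be a formal power series over K with zero constant term satisfying v(f_k) ≥ (q(j)/a)·c + p·c + (k−1)·c for all k ≥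 1. Then for every integer m ≥ 1, one has v( ∑_{k=1}^{pm−e_j} α_{pm−e_j−k}·f_k ) ≥ (q(j+1)/a)·c + p·c + (m−1)·c. -/
open scoped BigOperators

/-- Coefficientwise form of the first containment of Proposition 4.1 ("type 1" local
`U_p` estimate), `U_p ∘ A (𝒟_{e,s}) ⊆ 𝒟_{e,s}` on tail components. -/
theorem stmt1
    (p a s : ℕ) (hp : p.Prime) (hp3 : 3 ≤ p) (ha : 0 < a) (hs : 0 < s)
    (c : ℝ) (hc : c = 1 / (s * (p - 1)))
    (e : ℤ → ℤ) (he : ∀ i : ℤ, e (i + a) = e i)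
    (he0 : ∀ i : ℤ, 0 ≤ e i) (he1 : ∀ i : ℤ, e i ≤ (p : ℤ) - 1)
    (ω : ℤ) (hω : ω = ∑ i ∈ Finset.range a, e i)
    (q : ℤ → ℤ) (hq : ∀ j : ℤ, q j = -∑ i ∈ Finset.range a, ((i : ℤ) + 1) * e (i + j))
    (K : Type*) [Field K]
    (v : K → WithTop ℝ)
    (hv_add : ∀ x y : K, min (v x) (v y) ≤ v (x + y))
    (hv_mul : ∀ x y : K, v (x * y) = v x + v y)
    (hv_zero : v 0 = ⊤)
    (α : ℤ → K) (hαneg : ∀ k : ℤ, k < 0 → α k = 0)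
    (hα : ∀ k : ℤ, 0 ≤ k → (((k : ℝ) * c : ℝ) : WithTop ℝ) ≤ v (α k))
    (j : ℤ)
    (f : ℤ → K) (hf0 : ∀ k : ℤ, k ≤ 0 → f k = 0)
    (hf : ∀ k : ℤ, 1 ≤ k →
      (((q j : ℝ) / (a : ℝ) * c + (p : ℝ) * c + ((k : ℝ) - 1) * c : ℝ) : WithTop ℝ) ≤ v (f k)) :
    ∀ m : ℤ, 1 ≤ m →
      (((q (j + 1) : ℝ) / (a : ℝ) * c + (p : ℝ) * c + ((m : ℝ) - 1) * c : ℝ) : WithTop ℝ)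
        ≤ v (∑ k ∈ Finset.Icc (1 : ℤ) ((p : ℤ) * m - e j),
              α ((p : ℤ) * m - e j - k) * f k) := by
  intro m hm
  have hcpos : 0 ≤ c := by
    rw [hc]
    have h1 : (3 : ℝ) ≤ (p : ℝ) := by exact_mod_cast hp3
    have h2 : (0 : ℝ) ≤ (p : ℝ) - 1 := by linarith
    positivity
  have haR : (0 : ℝ) < (a : ℝ) := by exact_mod_cast ha
  -- recursion for q
  have hrec : q (j + 1) = q j + ∑ i ∈ Finset.range a, e (i + j) - a * e j := by
    have h1 := Finset.sum_range_succ (fun i : ℕ => (i : ℤ) * e (i + j)) a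
    have h2 := Finset.sum_range_succ' (fun i : ℕ => (i : ℤ) * e (i + j)) a
    have h3 : ∑ i ∈ Finset.range a, ((i : ℤ) + 1) * e (i + (j + 1))
        = ∑ i ∈ Finset.range a, ((i + 1 : ℕ) : ℤ) * e (((i + 1 : ℕ) : ℤ) + j) := by
      refine Finset.sum_congr rfl fun i _ => ?_
      push_cast
      congr 2
      ring
    have h4 : ∑ i ∈ Finset.range a, ((i : ℤ) + 1) * e (i + j)
        = ∑ i ∈ Finset.range a, (i : ℤ) * e (i + j) + ∑ i ∈ Finset.range a, e (i + j) := by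
      rw [← Finset.sum_add_distrib]
      exact Finset.sum_congr rfl fun i _ => by ring
    have h5 : e ((a : ℤ) + j) = e j := by rw [add_comm, he]
    rw [hq, hq, h3, h4]
    simp only [h5] at h1
    simp only [Nat.cast_zero, zero_mul, add_zero] at h2
    linarith
  have hS : ∑ i ∈ Finset.range a, e (i + j) ≤ a * ((p : ℤ) - 1) := by
    have h := Finset.sum_le_card_nsmul (Finset.range a) (fun i : ℕ => e (i + j)) ((p : ℤ) - 1)
      (fun i _ => he1 _)
    simpa using h
  have hZ : q (j + 1) ≤ q j + a * ((p : ℤ) - 1) * m - a * e j := by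
    have h1 : (3 : ℤ) ≤ (p : ℤ) := by exact_mod_cast hp3
    have h2 : (0 : ℤ) ≤ a * ((p : ℤ) - 1) := mul_nonneg (by positivity) (by linarith)
    nlinarith
  have hR : (q (j + 1) : ℝ) / a ≤ (q j : ℝ) / a + ((p : ℝ) - 1) * m - e j := by
    have h : (q (j + 1) : ℝ) ≤ q j + a * ((p : ℝ) - 1) * m - a * e j := by exact_mod_cast hZ
    rw [div_le_iff₀ haR]
    have h' : ((q j : ℝ) / a + ((p : ℝ) - 1) * m - e j) * a
        = q j + a * ((p : ℝ) - 1) * m - a * e j := by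
      field_simp
    linarith
  refine Finset.sum_induction _ (fun x => _ ≤ v x)
    (fun x y hx hy => (le_min hx hy).trans (hv_add x y)) (by simp [hv_zero]) ?_
  intro k hk
  rw [Finset.mem_Icc] at hk
  rw [hv_mul]
  refine le_trans ?_ (add_le_add (hα _ (by linarith [hk.2])) (hf k hk.1))
  rw [← WithTop.coe_add, WithTop.coe_le_coe]
  push_cast
  have := mul_le_mul_of_nonneg_right hR hcpos
  linarith
end

section
/- Let R be a commutative ring, let p and a be positive integers, and let e_0, …, e_{a−1} be nonnegative integers, with indices read modulo a. In the ring R[t, t^{−1}] of Laurent polynomials, for each k ≥ 0 let φ_k : R[t,t^{−1}] → R[t,t^{−1}] be the R-algebra endomorphism sending t to t^{p^k}. Let C₀ be the a×a matrix over R[t,t^{−1}] whose only nonzero entries are (C₀)_{j+1 mod a, j} = t^{−e_j} for j = 0, …, a−1. Then the matrix product φ_{a−1}(C₀)·φ_{a−2}(C₀)·⋯·φ_1(C₀)·C₀ (with φ_k applied entrywise) equals the diagonal matrix diag(t^{−ε_0}, …, t^{−ε_{a−1}}), where ε_j = ∑_{i=0}^{a−1} e_{(i+j) mod a}·p^i.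 -/
open LaurentPolynomial

theorem phi_T_aux {R : Type*} [CommRing R] (f : LaurentPolynomial R →ₐ[R] LaurentPolynomial R)
    (m : ℤ) (hf : f (T 1) = T m) (n : ℕ) : f (T (-(n : ℤ))) = T (-((n : ℤ) * m)) := by
  have h1 : f (T (n : ℤ)) = T ((n : ℤ) * m) := by
    have h : (T (n : ℤ) : LaurentPolynomial R) = (T 1) ^ n := by
      rw [T_pow]; simp
    rw [h, map_pow, hf, T_pow]
  have h2 : f (T (-(n : ℤ))) * f (T (n : ℤ)) = 1 := by
    rw [← map_mul, ← T_add]; simp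
  rw [h1] at h2
  calc f (T (-(n : ℤ))) = f (T (-(n : ℤ))) * (T ((n : ℤ) * m) * T (-((n : ℤ) * m))) := by
        rw [← T_add]; simp
    _ = T (-((n : ℤ) * m)) := by rw [← mul_assoc, h2, one_mul]

theorem ofNat_succ_aux (a : ℕ) [NeZero a] (n : ℕ) :
    Fin.ofNat a (n + 1) = Fin.ofNat a n + 1 := by
  apply Fin.ext
  simp [Fin.val_add, Fin.ofNat]

/-- Computational core of Proposition 5.5(1): the twisted product
`φ_{a−1}(C₀)·⋯·φ_1(C₀)·C₀` of the cyclic dual `p`-Frobenius structure matrix equals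
`diag(t^{−ε_0}, …, t^{−ε_{a−1}})`, where `ε_j = ∑_i e_{(i+j) mod a} p^i`. -/
theorem stmt3
    (R : Type*) [CommRing R]
    (p a : ℕ) (hp : 0 < p) (ha : 0 < a) [NeZero a]
    (e : Fin a → ℕ)
    (φ : ℕ → (LaurentPolynomial R →ₐ[R] LaurentPolynomial R))
    (hφ : ∀ k : ℕ, φ k (T 1) = T ((p : ℤ) ^ k))
    (C₀ : Matrix (Fin a) (Fin a) (LaurentPolynomial R))
    (hC₀ : ∀ r c : Fin a, C₀ r c = if r = c + 1 then T (-(e c : ℤ)) else 0) :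
    (((List.range a).reverse.map (fun k => C₀.map ⇑(φ k))).prod)
      = Matrix.diagonal
          (fun j : Fin a => T (-(∑ i : Fin a, (e (i + j) : ℤ) * (p : ℤ) ^ (i : ℕ)))) := by
  have key : ∀ n : ℕ, ∀ r c : Fin a,
      (((List.range n).reverse.map (fun k => C₀.map ⇑(φ k))).prod) r c =
        if r = c + Fin.ofNat a n then
          T (-(∑ i ∈ Finset.range n, (e (Fin.ofNat a i + c) : ℤ) * (p : ℤ) ^ i)) else 0 := by
    intro n
    induction n with
    | zero =>
      intro r c
      have h0 : Fin.ofNat a 0 = 0 := rfl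
      simp [Matrix.one_apply, h0]
    | succ n ih =>
      intro r c
      rw [List.range_succ, List.reverse_append, List.reverse_singleton, List.singleton_append,
        List.map_cons, List.prod_cons, Matrix.mul_apply,
        Finset.sum_eq_single (c + Fin.ofNat a n)]
      · rw [ih, if_pos rfl, Matrix.map_apply, hC₀, ofNat_succ_aux, ← add_assoc]
        split_ifs with h
        · rw [phi_T_aux _ _ (hφ n), ← T_add, Finset.sum_range_succ, add_comm c]
          congr 1
          ring
        · simp
      · intro b _ hb
        rw [ih, if_neg hb, mul_zero]
      · simp
  ext1 r c
  have h0 : Fin.ofNat a a = 0 := by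
    apply Fin.ext
    simp [Fin.ofNat]
  rw [key, h0, add_zero, Matrix.diagonal_apply]
  split_ifs with h
  · subst h
    rw [← Fin.sum_univ_eq_sum_range
      (fun i => (e (Fin.ofNat a i + r) : ℤ) * (p : ℤ) ^ i)]
    simp only [Fin.ofNat_val_eq_self]
  · rfl
end

section
/- Let L be a complete nonarchimedean nontrivially normed field whose closed unit ball O_L is a discrete valuation ring with maximal ideal 𝔪, and suppose the norm on L is multiplicative. Let R and S be Banach spaces over L whose norms are ultrametric, compatible with the norm of L, and take values in the set of norms of elements of L. Let R₀ = {x ∈ R : ‖x‖ ≤ 1} and S₀ = {y ∈ S : ‖y‖ ≤ 1}, regarded as O_L-submodules, and let R̄ = R₀/𝔪R₀, S̄ = S₀/𝔪S₀. Let f : R → S be a continuous L-linear map with f(R₀) ⊆ S₀, and let f̄ : R̄ → S̄ be the induced map. If f̄ is surjective, then f is surjective, f(R₀) = S₀, and the image of ker(f) ∩ R₀ in R̄ equals ker(f̄). -/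
/-- Lemma 7.3 of the paper: for a continuous linear map `f : R → S` of nonarchimedean
Banach spaces over a complete discretely valued nonarchimedean field `L`, with
`f(R₀) ⊆ S₀`, if the induced map `f̄ : R₀/𝔪R₀ → S₀/𝔪S₀` is surjective then `f` is
surjective, `f(R₀) = S₀`, and the image of `ker f ∩ R₀` in `R̄` is `ker f̄`.
(Here the unit balls `R₀, S₀` and the reductions are expressed elementwise: `𝔪R₀` is
the set of elements of norm `< 1`, using that norms of vectors lie in the norm group
of `L` and that the valuation of `L` is discrete.) -/
theorem stmt4
    (L : Type*) [NontriviallyNormedField L] [CompleteSpace L]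
    (hL_na : IsNonarchimedean (fun x : L => ‖x‖))
    (hdvr : ∃ π : L, 0 < ‖π‖ ∧ ‖π‖ < 1 ∧ ∀ x : L, x ≠ 0 → ∃ n : ℤ, ‖x‖ = ‖π‖ ^ n)
    (R S : Type*)
    [NormedAddCommGroup R] [NormedSpace L R] [CompleteSpace R]
    [NormedAddCommGroup S] [NormedSpace L S] [CompleteSpace S]
    (hR_na : IsNonarchimedean (fun x : R => ‖x‖))
    (hS_na : IsNonarchimedean (fun y : S => ‖y‖))
    (hR_comp : ∀ (c : L) (x : R), ‖c • x‖ = ‖c‖ * ‖x‖)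
    (hS_comp : ∀ (c : L) (y : S), ‖c • y‖ = ‖c‖ * ‖y‖)
    (hR_val : ∀ x : R, x ≠ 0 → ∃ c : L, ‖x‖ = ‖c‖)
    (hS_val : ∀ y : S, y ≠ 0 → ∃ c : L, ‖y‖ = ‖c‖)
    (f : R →L[L] S)
    (hf_int : ∀ x : R, ‖x‖ ≤ 1 → ‖f x‖ ≤ 1)
    (hsurj : ∀ y : S, ‖y‖ ≤ 1 → ∃ x : R, ‖x‖ ≤ 1 ∧ ‖f x - y‖ < 1) :
    Function.Surjective f ∧
      (∀ y : S, ‖y‖ ≤ 1 → ∃ x : R, ‖x‖ ≤ 1 ∧ f x = y) ∧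
      (∀ x : R, ‖x‖ ≤ 1 →
        (‖f x‖ < 1 ↔ ∃ x' : R, f x' = 0 ∧ ‖x'‖ ≤ 1 ∧ ‖x - x'‖ < 1)) := by
  obtain ⟨π, hπ0, hπ1, hπ⟩ := hdvr
  have hπne : π ≠ 0 := norm_pos_iff.mp hπ0
  have key : ∀ c : L, ‖c‖ < 1 → ‖c‖ ≤ ‖π‖ := by
    intro c hc
    by_cases h0 : c = 0
    · simp [h0]
    obtain ⟨n, hn⟩ := hπ c h0
    rw [hn] at hc ⊢
    have h1 : 1 ≤ n := by
      by_contra hlt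
      have h2 : n ≤ 0 := by omega
      have h3 : ‖π‖ ^ (0 : ℤ) ≤ ‖π‖ ^ n := zpow_le_zpow_right_of_le_one₀ hπ0 hπ1.le h2
      rw [zpow_zero] at h3
      linarith
    have h4 : ‖π‖ ^ n ≤ ‖π‖ ^ (1 : ℤ) := zpow_le_zpow_right_of_le_one₀ hπ0 hπ1.le h1
    simpa using h4
  have keyR : ∀ x : R, ‖x‖ < 1 → ‖π⁻¹ • x‖ ≤ 1 := by
    intro x hx
    by_cases h0 : x = 0
    · simp [h0]
    obtain ⟨c, hc⟩ := hR_val x h0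
    rw [hR_comp, norm_inv, inv_mul_le_one₀ hπ0, hc]
    exact key c (hc ▸ hx)
  have keyS : ∀ x : S, ‖x‖ < 1 → ‖π⁻¹ • x‖ ≤ 1 := by
    intro x hx
    by_cases h0 : x = 0
    · simp [h0]
    obtain ⟨c, hc⟩ := hS_val x h0
    rw [hS_comp, norm_inv, inv_mul_le_one₀ hπ0, hc]
    exact key c (hc ▸ hx)
  have main : ∀ y : S, ‖y‖ ≤ 1 → ∃ x : R, ‖x‖ ≤ 1 ∧ f x = y := by
    choose! g hg1 hg2 using hsurj
    intro y hy
    let T : S → S := fun z => π⁻¹ • (z - f (g z))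
    let u : ℕ → S := fun n => T^[n] y
    have hu_succ : ∀ n, u (n + 1) = π⁻¹ • (u n - f (g (u n))) := by
      intro n
      simp only [u, Function.iterate_succ_apply', T]
    have hu : ∀ n, ‖u n‖ ≤ 1 := by
      intro n
      induction n with
      | zero => simpa [u] using hy
      | succ n ih =>
        rw [hu_succ]
        apply keyS
        rw [norm_sub_rev]
        exact hg2 _ ih
    let s : ℕ → R := fun n => ∑ i ∈ Finset.range n, π ^ i • g (u i)
    have hs_succ : ∀ n, s (n + 1) = s n + π ^ n • g (u n) := fun n =>
      Finset.sum_range_succ _ _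
    have hterm : ∀ n, ‖π ^ n • g (u n)‖ ≤ 1 * ‖π‖ ^ n := by
      intro n
      rw [hR_comp, norm_pow, mul_comm]
      exact mul_le_mul_of_nonneg_right (hg1 _ (hu n)) (by positivity)
    have hs1 : ∀ n, ‖s n‖ ≤ 1 := by
      intro n
      induction n with
      | zero => simp [s]
      | succ n ih =>
        rw [hs_succ]
        refine (hR_na _ _).trans (max_le ih ((hterm n).trans ?_))
        rw [one_mul]
        exact pow_le_one₀ hπ0.le hπ1.le
    have hfs : ∀ n, f (s n) = y - π ^ n • u n := by
      intro n
      induction n with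
      | zero => simp [s, u]
      | succ n ih =>
        rw [hs_succ, map_add, ih, hu_succ, map_smul, smul_smul, pow_succ, mul_assoc,
          mul_inv_cancel₀ hπne, mul_one, smul_sub]
        abel
    have hc : CauchySeq s := by
      refine cauchySeq_of_le_geometric ‖π‖ 1 hπ1 (fun n => ?_)
      rw [hs_succ, dist_eq_norm, sub_add_cancel_left, norm_neg]
      exact hterm n
    obtain ⟨x, hx⟩ := cauchySeq_tendsto_of_complete hc
    refine ⟨x, le_of_tendsto' hx.norm hs1, ?_⟩
    have h1 : Filter.Tendsto (fun n => f (s n)) Filter.atTop (nhds (f x)) :=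
      (f.continuous.tendsto x).comp hx
    have h0 : Filter.Tendsto (fun n => π ^ n • u n) Filter.atTop (nhds 0) := by
      refine squeeze_zero_norm (fun n => ?_) (tendsto_pow_atTop_nhds_zero_of_lt_one hπ0.le hπ1)
      rw [hS_comp, norm_pow]
      exact mul_le_of_le_one_right (by positivity) (hu n)
    have h2 : Filter.Tendsto (fun n => f (s n)) Filter.atTop (nhds y) := by
      simp only [hfs]
      simpa using h0.const_sub y
    exact tendsto_nhds_unique h1 h2
  refine ⟨?_, main, ?_⟩
  · intro y
    by_cases h0 : y = 0
    · exact ⟨0, by simp [h0]⟩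
    obtain ⟨c, hc⟩ := hS_val y h0
    have hcn : ‖c‖ ≠ 0 := by rw [← hc]; exact norm_ne_zero_iff.mpr h0
    have hc0 : c ≠ 0 := norm_ne_zero_iff.mp hcn
    obtain ⟨x, -, hx⟩ := main (c⁻¹ • y) (by rw [hS_comp, norm_inv, hc, inv_mul_cancel₀ hcn])
    exact ⟨c • x, by rw [map_smul, hx, smul_inv_smul₀ hc0]⟩
  · intro x hx
    constructor
    · intro h
      obtain ⟨z, hz1, hz⟩ := main _ (keyS _ h)
      have hlt : ‖π • z‖ < 1 := by
        rw [hR_comp]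
        exact (mul_le_of_le_one_right hπ0.le hz1).trans_lt hπ1
      refine ⟨x - π • z, ?_, ?_, ?_⟩
      · rw [map_sub, map_smul, hz, smul_inv_smul₀ hπne, sub_self]
      · rw [sub_eq_add_neg]
        refine (hR_na _ _).trans (max_le hx ?_)
        simpa using hlt.le
      · simpa using hlt
    · rintro ⟨x', h0, -, hlt⟩
      have h1 := hf_int _ (keyR _ hlt)
      rw [map_smul, map_sub, h0, sub_zero, hS_comp, norm_inv, inv_mul_le_one₀ hπ0] at h1
      exact h1.trans_lt hπ1
end

section
/- Let K be a field with a complete nonarchimedean (ultrametric, multiplicative) norm ‖·‖, let I be a countable type, and let n : I × I → K be a doubly indexed family ('matrix', with n(r,c) the entry in row r and column c). For each i ∈ I, suppose the column supremum C_i = sup_{j ∈ I} ‖n(j,i)‖ is finite, and suppose that for every ε > 0 the set {i ∈ I : C_i > ε} is finite. Then for every integer d ≥ 0: (1) the family indexed by pairs (S, σ), where S ranges over d-element finite subsets of I and σ over permutations of S, with value sgn(σ)·∏_{i∈S} n(i, σ(i)), is summable in K; and (2) its sum c_d satisfies ‖c_d‖ ≤ sup over d-element finite subsets S of I of ∏_{i∈S}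 C_i. -/
open scoped BigOperators

/-- Lemma 6.7 of the paper in coefficient form: the coefficients of the Fredholm
determinant of a matrix `n` over a complete nonarchimedean field whose column suprema
`C_i` tend to `0` are given by summable families, and `‖c_d‖` is bounded by the
supremum over `d`-element subsets `S` of `∏_{i ∈ S} C_i`. -/
theorem stmt5
    (K : Type*) [NormedField K] [CompleteSpace K]
    (hK : IsNonarchimedean (fun x : K => ‖x‖))
    (I : Type*) [Countable I] [DecidableEq I]
    (n : I × I → K)
    (hbdd : ∀ i : I, BddAbove (Set.range fun j : I => ‖n (j, i)‖))
    (hfin : ∀ ε : ℝ, 0 < ε → {i : I | ε < ⨆ j : I, ‖n (j, i)‖}.Finite)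
    (d : ℕ) :
    Summable (fun Sσ : Σ S : {S : Finset I // S.card = d}, Equiv.Perm {x // x ∈ S.1} =>
        ((Equiv.Perm.sign Sσ.2 : ℤ) : K) * ∏ i : {x // x ∈ Sσ.1.1}, n (i.1, (Sσ.2 i).1)) ∧
      ‖∑' Sσ : Σ S : {S : Finset I // S.card = d}, Equiv.Perm {x // x ∈ S.1},
          ((Equiv.Perm.sign Sσ.2 : ℤ) : K) * ∏ i : {x // x ∈ Sσ.1.1}, n (i.1, (Sσ.2 i).1)‖
        ≤ ⨆ S : {S : Finset I // S.card = d}, ∏ i ∈ S.1, ⨆ j : I, ‖n (j, i)‖ := by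
  haveI hU : IsUltrametricDist K := IsUltrametricDist.isUltrametricDist_of_isNonarchimedean_norm hK
  set C : I → ℝ := fun i => ⨆ j : I, ‖n (j, i)‖ with hC
  have hC0 : ∀ i, 0 ≤ C i := fun i => Real.iSup_nonneg fun j => norm_nonneg _
  have hnC : ∀ j i, ‖n (j, i)‖ ≤ C i := fun j i => le_ciSup (hbdd i) j
  -- a global bound on the column suprema
  obtain ⟨M, hM1, hM⟩ : ∃ M : ℝ, 1 ≤ M ∧ ∀ i, C i ≤ M := by
    have h1 := hfin 1 one_pos
    obtain ⟨B, hB⟩ := (h1.image C).bddAbove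
    refine ⟨max 1 B, le_max_left _ _, fun i => ?_⟩
    by_cases hi : 1 < C i
    · exact le_max_of_le_right (hB ⟨i, hi, rfl⟩)
    · exact le_max_of_le_left (not_lt.mp hi)
  have hpM : ∀ S : Finset I, ∏ i ∈ S, C i ≤ M ^ S.card := fun S =>
    (Finset.prod_le_prod (fun i _ => hC0 i) (fun i _ => hM i)).trans (by simp)
  -- bound of the individual terms
  have hterm : ∀ Sσ : (Σ S : {S : Finset I // S.card = d}, Equiv.Perm {x // x ∈ S.1}),
      ‖((Equiv.Perm.sign Sσ.2 : ℤ) : K) * ∏ i : {x // x ∈ Sσ.1.1}, n (i.1, (Sσ.2 i).1)‖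
        ≤ ∏ i ∈ Sσ.1.1, C i := by
    rintro ⟨S, σ⟩
    have hs : ‖((Equiv.Perm.sign σ : ℤ) : K)‖ = 1 := by
      rcases Int.units_eq_one_or (Equiv.Perm.sign σ) with h | h <;> simp [h]
    rw [norm_mul, hs, one_mul, norm_prod]
    calc ∏ i : {x // x ∈ S.1}, ‖n (i.1, (σ i).1)‖
        ≤ ∏ i : {x // x ∈ S.1}, C (σ i).1 :=
          Finset.prod_le_prod (fun i _ => norm_nonneg _) (fun i _ => hnC _ _)
      _ = ∏ i : {x // x ∈ S.1}, C i.1 := Equiv.prod_comp σ (fun i => C i.1)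
      _ = ∏ i ∈ S.1, C i := Finset.prod_coe_sort S.1 C
  -- only finitely many subsets have a large product
  have hfinS : ∀ ε : ℝ, 0 < ε →
      {S : {S : Finset I // S.card = d} | ε ≤ ∏ i ∈ S.1, C i}.Finite := by
    intro ε hε
    have hMd : 0 < M ^ d := pow_pos (by linarith) d
    have hδ : 0 < ε / (2 * M ^ d) := by positivity
    have hF := hfin _ hδ
    refine Set.Finite.of_finite_image (f := Subtype.val) ?_ Subtype.val_injective.injOn
    refine (hF.toFinset.powerset.finite_toSet).subset ?_
    rintro _ ⟨⟨S, hS⟩, hprod, rfl⟩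
    simp only [Finset.coe_powerset, Set.mem_preimage, Set.mem_powerset_iff]
    intro i hi
    simp only [Set.Finite.coe_toFinset, Set.mem_setOf_eq]
    by_contra hlt
    have hle : C i ≤ ε / (2 * M ^ d) := not_lt.mp hlt
    have hi' : i ∈ S := hi
    have h2 : ∏ k ∈ S.erase i, C k ≤ M ^ d := by
      refine (hpM _).trans (pow_le_pow_right₀ hM1 ?_)
      rw [← hS]
      exact Finset.card_le_card (Finset.erase_subset _ _)
    have h3 : ∏ k ∈ S, C k ≤ ε / (2 * M ^ d) * M ^ d := by
      rw [← Finset.mul_prod_erase S C hi']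
      exact mul_le_mul hle h2 (Finset.prod_nonneg fun k _ => hC0 k) hδ.le
    have h4 : ε / (2 * M ^ d) * M ^ d = ε / 2 := by field_simp
    have h5 : ε ≤ ∏ k ∈ S, C k := hprod
    linarith
  refine ⟨?_, ?_⟩
  · apply NonarchimedeanAddGroup.summable_of_tendsto_cofinite_zero
    rw [Metric.tendsto_nhds]
    intro ε hε
    rw [Filter.eventually_cofinite]
    have hfs : (Sigma.fst ⁻¹' {S : {S : Finset I // S.card = d} | ε ≤ ∏ i ∈ S.1, C i} :
        Set (Σ S : {S : Finset I // S.card = d}, Equiv.Perm {x // x ∈ S.1})).Finite := by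
      refine Set.Finite.preimage' (hfinS ε hε) fun S _ => ?_
      refine (Set.finite_range (fun σ : Equiv.Perm {x // x ∈ S.1} =>
        (⟨S, σ⟩ : Σ S : {S : Finset I // S.card = d}, Equiv.Perm {x // x ∈ S.1}))).subset ?_
      rintro ⟨T, σ⟩ hT
      obtain rfl : T = S := hT
      exact ⟨σ, rfl⟩
    refine hfs.subset ?_
    intro x hx
    simp only [Set.mem_setOf_eq, dist_zero_right, not_lt] at hx
    exact hx.trans (hterm x)
  · have hb : BddAbove (Set.range fun S : {S : Finset I // S.card = d} => ∏ i ∈ S.1, C i) := by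
      refine ⟨M ^ d, ?_⟩
      rintro _ ⟨S, rfl⟩
      exact (hpM S.1).trans (by rw [S.2])
    refine IsUltrametricDist.norm_tsum_le_of_forall_le_of_nonneg
      (Real.iSup_nonneg fun S => Finset.prod_nonneg fun k _ => hC0 k) fun x => ?_
    exact (hterm x).trans (le_ciSup hb x.1)
end
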